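/- arXiv:0906.2450 — 4 statements merged into one kernel-verified Lean document; each statement's English description precedes it below -/
import Mathlib

section
/- For every nonnegative integer n, there exist integers x, y, z such that n = p_3(x) + p_5(y) + p_11(z), where p_3(x) = (x² + x)/2, p_5(y) = (3y² − y)/2, and p_11(z) = (9z² − 7z)/2. In other words, the sum p_3 + p_5 + p_11 is universal over ℤ. -/
/-- Generalized triangular number: `p₃(x) = (x² + x)/2`. -/
def p3 (x : ℤ) : ℤ := (x ^ 2 + x) / 2

/-- Generalized pentagonal number: `p₅(x) = (3x² − x)/2`. -/
def p5 (x : ℤ) : ℤ := (3 * x ^ 2 - x) / 2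

/-- Generalized hendecagonal number: `p₁₁(x) = (9x² − 7x)/2`. -/
def p11 (x : ℤ) : ℤ := (9 * x ^ 2 - 7 * x) / 2

/-!
Completing squares, `n = p₃(x) + p₅(y) + p₁₁(z)` becomes `72 n + 61 = 9 X² + 3 Y² + Z²` with
`X`, `Y`, `Z` odd, `3 ∤ Y` and `Z ≡ ±2 (mod 9)`.

Let `N = 72 n + 61`. Dirichlet's theorem provides a prime `p` and `b ≡ 1 (mod 24)` with
`b N = 2 p + 3`, and quadratic reciprocity solves `t² + b = 2 p d`. The Gram matrix with rows
`(2p, t, 0)`, `(t, d, 1)`, `(0, 1, N)` is then positive definite of determinant `3`, so Hermite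
reduction carries it to `x² + y² + 3 z²` or to `x² + 2 y² ± 2 y z + 2 z²`. The second form
represents `6` and the given one, modulo powers of `3`, cannot; hence `N = x² + y² + 3 z²`.

Multiplying `y + z √-3` by a sixth root of unity makes `x`, `y`, `z` odd. As `N ≡ 1 (mod 3)`, one
of `x`, `y` is divisible by `3`, say `x = 3 X`, and a sixth root of unity applied to the other two
variables gives `3 ∤ Y`. The condition on `Z` modulo `9` is then automatic.
-/

open Matrix

/-! ### Hermite reduction of ternary forms -/

section GramMatrix

variable {n R : Type*} [Fintype n] [DecidableEq n] [CommRing R]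

/-- `A` and `B` are Gram matrices of one quadratic form on `Rⁿ` in two bases: classical
equivalence of quadratic forms. -/
def GramEquiv (A B : Matrix n n R) : Prop :=
  ∃ U : Matrix n n R, IsUnit U ∧ Uᵀ * A * U = B

namespace GramEquiv

variable {A B C : Matrix n n R}

theorem refl (A : Matrix n n R) : GramEquiv A A :=
  ⟨1, isUnit_one, by simp⟩

theorem trans : GramEquiv A B → GramEquiv B C → GramEquiv A C := by
  rintro ⟨U, hU, rfl⟩ ⟨V, hV, rfl⟩
  exact ⟨U * V, hU.mul hV, by simp only [transpose_mul, Matrix.mul_assoc]⟩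

theorem submatrix_perm (A : Matrix n n R) (σ : Equiv.Perm n) : GramEquiv A (A.submatrix σ σ) := by
  refine ⟨(1 : Matrix n n R).submatrix id σ, ?_, ?_⟩
  · exact (isUnit_submatrix_equiv (Equiv.refl n) σ).2 isUnit_one
  · ext i j
    simp [mul_apply, one_apply]

theorem posDef [PartialOrder R] [StarRing R] [TrivialStar R] (h : GramEquiv A B)
    (hA : A.PosDef) : B.PosDef := by
  obtain ⟨U, hU, rfl⟩ := h
  rw [← conjTranspose_eq_transpose_of_trivial]
  exact (hU.posDef_star_left_conjugate_iff).2 hA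

theorem range_toQuadraticForm' (h : GramEquiv A B) :
    Set.range B.toQuadraticForm' = Set.range A.toQuadraticForm' := by
  obtain ⟨U, hU, rfl⟩ := h
  have hcomp : ⇑(Uᵀ * A * U).toQuadraticForm' = A.toQuadraticForm' ∘ U.mulVec := by
    ext v
    simp [toQuadraticForm', toLinearMap₂'_apply', ← mulVec_mulVec, dotProduct_mulVec,
      vecMul_transpose]
  have hsurj : Function.Surjective U.mulVec := mulVec_surjective_iff_isUnit.2 hU
  rw [hcomp, hsurj.range_comp]

theorem det_eq {A B : Matrix n n ℤ} (h : GramEquiv A B) : B.det = A.det := by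
  obtain ⟨U, hU, rfl⟩ := h
  have hdet : U.det ^ 2 = 1 := Int.isUnit_sq ((isUnit_iff_isUnit_det U).1 hU)
  rw [det_mul, det_mul, det_transpose]
  linear_combination A.det * hdet

end GramEquiv

end GramMatrix

section PrincipalMinor

variable {n R : Type*} [CommRing R]

/-- The `2 × 2` principal minor of `A` on the rows and columns `i`, `j`. -/
def principalMinor (A : Matrix n n R) (i j : n) : R :=
  A i i * A j j - A i j * A j i

theorem principalMinor_pos [LinearOrder R] [IsStrictOrderedRing R] [StarRing R] [TrivialStar R]
    {A : Matrix n n R} (hA : A.PosDef) {i j : n} (hij : i ≠ j) : 0 < principalMinor A i j := by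
  have hii : 0 < A i i := hA.diag_pos
  have hinj : Function.Injective ![i, j] := by
    intro k l
    fin_cases k <;> fin_cases l <;> simp [hij, hij.symm]
  have hne : ![-A i j, A i i] ≠ 0 := fun h ↦ hii.ne' (by simpa using congrFun h 1)
  have hpos := (hA.submatrix hinj).dotProduct_mulVec_pos hne
  have hval : star ![-A i j, A i i] ⬝ᵥ A.submatrix ![i, j] ![i, j] *ᵥ ![-A i j, A i i] =
      A i i * principalMinor A i j := by
    simp only [mulVec, dotProduct, Fin.sum_univ_two, star_trivial, submatrix_apply, cons_val_zero,
      cons_val_one, cons_val_fin_one, principalMinor]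
    ring
  exact pos_of_mul_pos_right (hval ▸ hpos) hii.le

end PrincipalMinor

section Ternary

variable {R : Type*} [CommRing R] {A : Matrix (Fin 3) (Fin 3) R}

/-- The minor of `A` on the rows `0`, `1` and the columns `0`, `2`: `A 0 0` times the mixed
coefficient left when the square of the first variable is completed. -/
def mixedMinor (A : Matrix (Fin 3) (Fin 3) R) : R :=
  A 0 0 * A 1 2 - A 0 2 * A 1 0

theorem toQuadraticForm'_fin_three (hA : A.IsSymm) (v : Fin 3 → R) :
    A.toQuadraticForm' v = A 0 0 * v 0 ^ 2 + A 1 1 * v 1 ^ 2 + A 2 2 * v 2 ^ 2 +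
      2 * A 0 1 * v 0 * v 1 + 2 * A 0 2 * v 0 * v 2 + 2 * A 1 2 * v 1 * v 2 := by
  simp only [toQuadraticForm', LinearMap.BilinMap.toQuadraticMap_apply, toLinearMap₂'_apply',
    dotProduct, mulVec, Fin.sum_univ_three, hA.apply 0 1, hA.apply 0 2, hA.apply 1 2]
  ring

theorem mul_principalMinor_mul_toQuadraticForm' (hA : A.IsSymm) (v : Fin 3 → R) :
    A 0 0 * principalMinor A 0 1 * A.toQuadraticForm' v =
      principalMinor A 0 1 * (A 0 0 * v 0 + A 0 1 * v 1 + A 0 2 * v 2) ^ 2 +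
      (principalMinor A 0 1 * v 1 + mixedMinor A * v 2) ^ 2 +
      A 0 0 * A.det * v 2 ^ 2 := by
  rw [toQuadraticForm'_fin_three hA, det_fin_three, principalMinor, mixedMinor,
    hA.apply 0 1, hA.apply 0 2, hA.apply 1 2]
  ring

theorem principalMinor_zero_one_mul_principalMinor_zero_two (hA : A.IsSymm) :
    principalMinor A 0 1 * principalMinor A 0 2 = A 0 0 * A.det + mixedMinor A ^ 2 := by
  rw [det_fin_three, principalMinor, principalMinor, mixedMinor,
    hA.apply 0 1, hA.apply 0 2, hA.apply 1 2]
  ring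

theorem posDef_fin_three_of_minors_pos [LinearOrder R] [IsStrictOrderedRing R] [StarRing R]
    [TrivialStar R] (hA : A.IsSymm) (hdiag : 0 < A 0 0) (hminor : 0 < principalMinor A 0 1)
    (hdet : 0 < A.det) : A.PosDef := by
  refine .of_toQuadraticForm' hA fun v hv ↦ ?_
  have hsum := mul_principalMinor_mul_toQuadraticForm' hA v
  have hprod : 0 < A 0 0 * principalMinor A 0 1 := mul_pos hdiag hminor
  have hdet' : 0 < A 0 0 * A.det := mul_pos hdiag hdet
  refine pos_of_mul_pos_right (hsum ▸ ?_) hprod.le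
  contrapose! hv
  have hfst := mul_nonneg hminor.le (sq_nonneg (A 0 0 * v 0 + A 0 1 * v 1 + A 0 2 * v 2))
  have hsnd := sq_nonneg (principalMinor A 0 1 * v 1 + mixedMinor A * v 2)
  have hthd := mul_nonneg hdet'.le (sq_nonneg (v 2))
  have h2 : v 2 = 0 := by
    simpa [hdiag.ne', hdet.ne'] using (by linarith : A 0 0 * A.det * v 2 ^ 2 = 0)
  have h1 : v 1 = 0 := by
    simpa [h2, hminor.ne'] using le_antisymm (by linarith) hsnd
  have h0 : v 0 = 0 := by
    simpa [h1, h2, hdiag.ne', hminor.ne'] using le_antisymm (by linarith) hfst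
  ext i
  fin_cases i <;> assumption

theorem exists_posDef_det_eq_mem_range [LinearOrder R] [IsStrictOrderedRing R] [StarRing R]
    [TrivialStar R] {a b t d D N : R} (ha : 0 < a) (hb : 0 < b) (hD : 0 < D)
    (htd : t ^ 2 + b = a * d) (hbN : b * N = a + D) :
    ∃ A : Matrix (Fin 3) (Fin 3) R, A.PosDef ∧ A.det = D ∧ A 0 0 = a ∧
      principalMinor A 0 1 = b ∧ N ∈ Set.range A.toQuadraticForm' := by
  let A : Matrix (Fin 3) (Fin 3) R := !![a, t, 0; t, d, 1; 0, 1, N]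
  have hsymm : A.IsSymm := by
    ext i j
    fin_cases i <;> fin_cases j <;> rfl
  have hminor : principalMinor A 0 1 = b := by
    change a * d - t * t = b
    linear_combination -htd
  have hdet : A.det = D := by
    simp only [A, det_fin_three, of_apply, cons_val', cons_val, cons_val_zero, cons_val_one,
      cons_val_fin_one]
    linear_combination hbN - N * htd
  have hA : A.PosDef := posDef_fin_three_of_minors_pos hsymm ha (hminor ▸ hb) (hdet ▸ hD)
  refine ⟨A, hA, hdet, rfl, hminor, ![0, 0, 1], ?_⟩
  simp [toQuadraticForm'_fin_three hsymm, A]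

-- The base change adds `i e₀` to `e₁`, and `k e₀ + j e₁` to `e₂`.
theorem exists_gramEquiv_translate (hA : A.IsSymm) (i j k : R) :
    ∃ B, GramEquiv A B ∧ B 0 0 = A 0 0 ∧ B 0 1 = A 0 1 + A 0 0 * i ∧
      B 0 2 = A 0 2 + A 0 1 * j + A 0 0 * k ∧ principalMinor B 0 1 = principalMinor A 0 1 ∧
      mixedMinor B = mixedMinor A + principalMinor A 0 1 * j := by
  let U : Matrix (Fin 3) (Fin 3) R := !![1, i, k; 0, 1, j; 0, 0, 1]
  have hU : IsUnit U := (isUnit_iff_isUnit_det U).2 (by simp [U, det_fin_three])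
  have h10 : A 1 0 = A 0 1 := hA.apply 0 1
  refine ⟨Uᵀ * A * U, ⟨U, hU, rfl⟩, ?_⟩
  simp only [principalMinor, mixedMinor, U, mul_apply, transpose_apply, Fin.sum_univ_three,
    of_apply, cons_val', cons_val, cons_val_zero, cons_val_one, cons_val_fin_one, h10]
  refine ⟨?_, ?_, ?_, ?_, ?_⟩ <;> ring

end Ternary

/-- Size reduction: the second basis vector modulo the first, and the third modulo the first two,
are as close to orthogonal to their predecessors as integral translations allow. The condition on
`mixedMinor` says, with denominators cleared, that a Gram–Schmidt coefficient is at most `1/2`. -/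
structure IsSizeReduced (A : Matrix (Fin 3) (Fin 3) ℤ) : Prop where
  abs_zero_one_le : |2 * A 0 1| ≤ A 0 0
  abs_zero_two_le : |2 * A 0 2| ≤ A 0 0
  abs_mixedMinor_le : |2 * mixedMinor A| ≤ principalMinor A 0 1

/-- Hermite reduction: a size-reduced Gram matrix for which neither exchanging the first two basis
vectors nor exchanging the last two makes the first two leading minors smaller. -/
structure IsHermiteReduced (A : Matrix (Fin 3) (Fin 3) ℤ) : Prop extends IsSizeReduced A where
  diag_le : A 0 0 ≤ A 1 1
  principalMinor_le : principalMinor A 0 1 ≤ principalMinor A 0 2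

theorem exists_abs_two_mul_add_mul_le (x : ℤ) {a : ℤ} (ha : 0 < a) :
    ∃ j : ℤ, |2 * (x + a * j)| ≤ a := by
  lift a to ℕ using ha.le
  have ha : 0 < a := by omega
  refine ⟨-x.bdiv a, ?_⟩
  have hlower := Int.le_bmod (x := x) ha
  have hupper := Int.bmod_lt (x := x) ha
  rw [mul_neg, ← sub_eq_add_neg, ← Int.bmod_eq_self_sub_mul_bdiv, abs_le]
  omega

theorem exists_gramEquiv_isSizeReduced {A : Matrix (Fin 3) (Fin 3) ℤ} (hA : A.PosDef) :
    ∃ B, GramEquiv A B ∧ IsSizeReduced B ∧ B 0 0 = A 0 0 ∧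
      principalMinor B 0 1 = principalMinor A 0 1 := by
  have hdiag : 0 < A 0 0 := hA.diag_pos
  have hminor : 0 < principalMinor A 0 1 := principalMinor_pos hA (by decide)
  obtain ⟨i, hi⟩ := exists_abs_two_mul_add_mul_le (A 0 1) hdiag
  obtain ⟨j, hj⟩ := exists_abs_two_mul_add_mul_le (mixedMinor A) hminor
  obtain ⟨k, hk⟩ := exists_abs_two_mul_add_mul_le (A 0 2 + A 0 1 * j) hdiag
  obtain ⟨B, hAB, h00, h01, h02, hB, hmixed⟩ :=
    exists_gramEquiv_translate (isHermitian_iff_isSymm.1 hA.isHermitian) i j k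
  refine ⟨B, hAB, ⟨?_, ?_, ?_⟩, h00, hB⟩
  · rwa [h00, h01]
  · rwa [h00, h02]
  · rwa [hB, hmixed]

theorem exists_gramEquiv_isHermiteReduced {A : Matrix (Fin 3) (Fin 3) ℤ} (hA : A.PosDef) :
    ∃ B, GramEquiv A B ∧ IsHermiteReduced B := by
  let key (B : Matrix (Fin 3) (Fin 3) ℤ) : ℕ ×ₗ ℕ :=
    toLex ((B 0 0).toNat, (principalMinor B 0 1).toNat)
  -- Size reduction preserves `key`, so a minimiser of `key` may be replaced by its size reduction.
  obtain ⟨B, hAB, hmin⟩ := exists_minimalFor_of_wellFoundedLT (GramEquiv A) key ⟨A, .refl A⟩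
  obtain ⟨C, hBC, hsize, hdiag, hminor⟩ := exists_gramEquiv_isSizeReduced (hAB.posDef hA)
  have hAC : GramEquiv A C := hAB.trans hBC
  have hC : C.PosDef := hAC.posDef hA
  have key_le (σ : Equiv.Perm (Fin 3)) : key C ≤ key (C.submatrix σ σ) := by
    have hkey : key C = key B := by simp only [key, hdiag, hminor]
    rw [hkey]
    exact (le_total _ _).elim id (hmin (hAC.trans (.submatrix_perm C σ)))
  have h01 := key_le (Equiv.swap 0 1)
  have h12 := key_le (Equiv.swap 1 2)
  have hpos : 0 < C 1 1 := hC.diag_pos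
  have hpos' : 0 < principalMinor C 0 2 := principalMinor_pos hC (by decide)
  refine ⟨C, hAC, hsize, ?_, ?_⟩
  · simp only [key, submatrix_apply, Equiv.swap_apply_left, Prod.Lex.toLex_le_toLex] at h01
    omega
  · have h12' : principalMinor (C.submatrix (Equiv.swap 1 2) (Equiv.swap 1 2)) 0 1 =
        principalMinor C 0 2 := rfl
    have hzero : C.submatrix (Equiv.swap 1 2) (Equiv.swap 1 2) 0 0 = C 0 0 := rfl
    simp only [key, h12', hzero, Prod.Lex.toLex_le_toLex] at h12
    omega

namespace IsHermiteReduced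

variable {A : Matrix (Fin 3) (Fin 3) ℤ}

theorem three_mul_sq_principalMinor_le (hred : IsHermiteReduced A) (hA : A.PosDef) :
    3 * principalMinor A 0 1 ^ 2 ≤ 4 * (A 0 0 * A.det) := by
  have hmul := principalMinor_zero_one_mul_principalMinor_zero_two
    (isHermitian_iff_isSymm.1 hA.isHermitian)
  have hpos : 0 < principalMinor A 0 1 := principalMinor_pos hA (by decide)
  have hmixed : (2 * mixedMinor A) ^ 2 ≤ principalMinor A 0 1 ^ 2 :=
    sq_le_sq' (abs_le.1 hred.abs_mixedMinor_le).1 (abs_le.1 hred.abs_mixedMinor_le).2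
  nlinarith [mul_le_mul_of_nonneg_left hred.principalMinor_le hpos.le]

theorem three_mul_sq_diag_le (hred : IsHermiteReduced A) (hA : A.PosDef) :
    3 * A 0 0 ^ 2 ≤ 4 * principalMinor A 0 1 := by
  have hsymm : A.IsSymm := isHermitian_iff_isSymm.1 hA.isHermitian
  have hpos : 0 < A 0 0 := hA.diag_pos
  have hoff : (2 * A 0 1) ^ 2 ≤ A 0 0 ^ 2 :=
    sq_le_sq' (abs_le.1 hred.abs_zero_one_le).1 (abs_le.1 hred.abs_zero_one_le).2
  rw [principalMinor, hsymm.apply 0 1]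
  nlinarith [mul_le_mul_of_nonneg_left hred.diag_le hpos.le]

theorem diag_cube_le (hred : IsHermiteReduced A) (hA : A.PosDef) :
    27 * A 0 0 ^ 3 ≤ 64 * A.det := by
  have hpos : 0 < A 0 0 := hA.diag_pos
  have hminor := hred.three_mul_sq_principalMinor_le hA
  have hsq : (3 * A 0 0 ^ 2) ^ 2 ≤ (4 * principalMinor A 0 1) ^ 2 :=
    pow_le_pow_left₀ (by positivity) (hred.three_mul_sq_diag_le hA) 2
  refine le_of_mul_le_mul_left (?_ : A 0 0 * _ ≤ A 0 0 * _) hpos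
  linarith

theorem row_zero_eq_of_det_eq_three (hred : IsHermiteReduced A) (hA : A.PosDef)
    (hdet : A.det = 3) : A 0 0 = 1 ∧ A 0 1 = 0 ∧ A 0 2 = 0 := by
  have hpos : 0 < A 0 0 := hA.diag_pos
  have hcube : 27 * A 0 0 ^ 3 ≤ 64 * 3 := hdet ▸ hred.diag_cube_le hA
  have h00 : A 0 0 = 1 := by
    by_contra hne
    have : 2 ^ 3 ≤ A 0 0 ^ 3 := by gcongr; omega
    omega
  have h01 := abs_le.1 hred.abs_zero_one_le
  have h02 := abs_le.1 hred.abs_zero_two_le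
  exact ⟨h00, by omega, by omega⟩

theorem eq_of_det_eq_three (hred : IsHermiteReduced A) (hA : A.PosDef) (hdet : A.det = 3) :
    A = diagonal ![1, 1, 3] ∨ A = !![1, 0, 0; 0, 2, 1; 0, 1, 2] ∨
      A = !![1, 0, 0; 0, 2, -1; 0, -1, 2] := by
  have hsymm : A.IsSymm := isHermitian_iff_isSymm.1 hA.isHermitian
  have h10 : A 1 0 = A 0 1 := hsymm.apply 0 1
  have h20 : A 2 0 = A 0 2 := hsymm.apply 0 2
  have h21 : A 2 1 = A 1 2 := hsymm.apply 1 2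
  obtain ⟨h00, h01, h02⟩ := hred.row_zero_eq_of_det_eq_three hA hdet
  have hminor : principalMinor A 0 1 = A 1 1 := by simp [principalMinor, h00, h01]
  have h12 := abs_le.1 hred.abs_mixedMinor_le
  have hsq := hred.three_mul_sq_principalMinor_le hA
  rw [hminor, hdet, h00] at hsq
  have h11 : 0 < A 1 1 := hA.diag_pos
  rw [det_fin_three, h10, h20, h21, h00, h01, h02] at hdet
  rw [mixedMinor, hminor, h10, h00, h01] at h12
  have hcases : (A 1 1 = 1 ∧ A 1 2 = 0 ∧ A 2 2 = 3) ∨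
      (A 1 1 = 2 ∧ A 1 2 = 1 ∧ A 2 2 = 2) ∨ (A 1 1 = 2 ∧ A 1 2 = -1 ∧ A 2 2 = 2) := by
    have hle : A 1 1 ≤ 2 := by nlinarith
    have hlower : -1 ≤ A 1 2 := by linarith
    have hupper : A 1 2 ≤ 1 := by linarith
    generalize A 1 1 = b, A 1 2 = r at *
    interval_cases b <;> interval_cases r <;> omega
  refine hcases.imp ?_ (Or.imp ?_ ?_)
  all_goals
    rintro ⟨h11, h12, h22⟩
    ext i j
    fin_cases i <;> fin_cases j <;> simp [*]

end IsHermiteReduced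

/-! ### Representation by `x² + y² + 3 z²` -/

theorem three_dvd_of_three_dvd_sq_add_sq {x y : ℤ} (h : 3 ∣ x ^ 2 + y ^ 2) :
    3 ∣ x ∧ 3 ∣ y := by
  have key : ∀ x y : ZMod 3, x ^ 2 + y ^ 2 = 0 → x = 0 ∧ y = 0 := by decide
  simpa [ZMod.intCast_zmod_eq_zero_iff_dvd] using
    key x y (by exact_mod_cast (ZMod.intCast_zmod_eq_zero_iff_dvd _ 3).2 h)

theorem six_notMem_range_of_det_eq_three {A : Matrix (Fin 3) (Fin 3) ℤ} (hA : A.IsSymm)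
    (hdet : A.det = 3) (hdiag : ¬ 3 ∣ A 0 0) (hminor : principalMinor A 0 1 ≡ 1 [ZMOD 3]) :
    6 ∉ Set.range A.toQuadraticForm' := by
  rintro ⟨v, hv⟩
  have hsum := mul_principalMinor_mul_toQuadraticForm' hA v
  rw [hv, hdet] at hsum
  generalize principalMinor A 0 1 = m at *
  generalize A 0 0 * v 0 + A 0 1 * v 1 + A 0 2 * v 2 = x at hsum
  generalize m * v 1 + mixedMinor A * v 2 = y at hsum
  obtain ⟨⟨x, rfl⟩, y, rfl⟩ : 3 ∣ x ∧ 3 ∣ y := by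
    apply three_dvd_of_three_dvd_sq_add_sq
    rw [show x ^ 2 + y ^ 2 = 3 * (A 0 0 * (2 * m - v 2 ^ 2)) - (m - 1) * x ^ 2 by
      linear_combination -hsum]
    exact dvd_sub (dvd_mul_right _ _) (hminor.symm.dvd.mul_right _)
  have hprod : 3 ∣ A 0 0 * (2 * m - v 2 ^ 2) := ⟨m * x ^ 2 + y ^ 2, by linarith⟩
  have hv : 3 ∣ 2 * m - v 2 ^ 2 := (Int.prime_three.dvd_or_dvd hprod).resolve_left hdiag
  have hone : 3 ∣ v 2 ^ 2 + 1 ^ 2 := by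
    have := hminor.symm.dvd
    omega
  exact absurd (three_dvd_of_three_dvd_sq_add_sq hone).2 (by decide)

theorem exists_sq_add_sq_add_three_mul_sq_eq_of_six_notMem_range {A : Matrix (Fin 3) (Fin 3) ℤ}
    (hA : A.PosDef) (hdet : A.det = 3) (hsix : 6 ∉ Set.range A.toQuadraticForm') {N : ℤ}
    (hN : N ∈ Set.range A.toQuadraticForm') : ∃ x y z : ℤ, x ^ 2 + y ^ 2 + 3 * z ^ 2 = N := by
  obtain ⟨B, hAB, hred⟩ := exists_gramEquiv_isHermiteReduced hA
  rw [← hAB.range_toQuadraticForm'] at hsix hN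
  obtain ⟨v, rfl⟩ := hN
  rcases hred.eq_of_det_eq_three (hAB.posDef hA) (hAB.det_eq.trans hdet) with rfl | rfl | rfl
  · exact ⟨v 0, v 1, v 2, by simp [toQuadraticForm'_fin_three (isSymm_diagonal _)]⟩
  all_goals
    refine absurd ⟨![2, 1, 0], ?_⟩ hsix
    rw [toQuadraticForm'_fin_three (by decide)]
    simp

open NumberTheorySymbols in
theorem jacobiSym_neg_three {b : ℕ} (hodd : Odd b) (hb : b % 3 = 1) : J(-3 | b) = 1 := by
  have hrec : J(3 | b) = (-1) ^ (b / 2) * J(b | 3) := by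
    simpa using jacobiSym.quadratic_reciprocity (a := 3) (by decide) hodd
  have hb3 : J(b | 3) = 1 := by
    rw [jacobiSym.mod_left, show (b : ℤ) % (3 : ℕ) = 1 by omega, jacobiSym.one_left]
  rw [jacobiSym.neg _ hodd, hrec, hb3, ZMod.χ₄_eq_neg_one_pow (Nat.odd_iff.1 hodd), mul_one,
    ← mul_pow]
  simp

open NumberTheorySymbols in
theorem jacobiSym_neg_eq_one {p b N : ℕ} (hp : p % 4 = 1) (hb : b % 24 = 1)
    (h : b * N = 2 * p + 3) : J(-b | p) = 1 := by
  have hpodd : Odd p := Nat.odd_iff.2 (by omega)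
  have hbodd : Odd b := Nat.odd_iff.2 (by omega)
  have htwo : J(2 | b) = 1 := by
    rw [jacobiSym.at_two hbodd, ZMod.χ₈_nat_mod_eight, show b % 8 = 1 by omega]
    rfl
  have hmod : (2 * p : ℤ) % b = -3 % b := by
    rw [show (2 * p : ℤ) = -3 + b * N by grind, Int.add_mul_emod_self_left]
  calc J(-b | p) = J(b | p) := by
        rw [jacobiSym.neg _ hpodd, ZMod.χ₄_nat_one_mod_four hp, one_mul]
    _ = J(p | b) := jacobiSym.quadratic_reciprocity_one_mod_four (by omega) hpodd
    _ = J(2 * p | b) := by rw [jacobiSym.mul_left, htwo, one_mul]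
    _ = J(-3 | b) := jacobiSym.mod_left' hmod
    _ = 1 := jacobiSym_neg_three hbodd (by omega)

theorem exists_prime_mul_eq_two_mul_add_three {N : ℕ} (h8 : N % 8 = 5) (h3 : ¬ 3 ∣ N) :
    ∃ p b : ℕ, p.Prime ∧ p % 4 = 1 ∧ b % 24 = 1 ∧ b * N = 2 * p + 3 := by
  obtain ⟨r, rfl⟩ : ∃ r, N = 2 * r + 3 := ⟨(N - 3) / 2, by omega⟩
  have h12 : r.Coprime 12 := by
    have hodd : Odd r := Nat.odd_iff.2 (by omega)
    have htwo : r.Coprime (2 ^ 2) := (Nat.coprime_two_right.2 hodd).pow_right 2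
    have hthree : r.Coprime 3 := (Nat.prime_three.coprime_iff_not_dvd.2 (by omega)).symm
    exact htwo.mul_right hthree
  have hN : r.Coprime (2 * r + 3) := by
    rw [Nat.coprime_mul_right_add_right]
    exact h12.coprime_dvd_right (by decide)
  obtain ⟨p, hlt, hp, hmod⟩ := Nat.forall_exists_prime_gt_and_modEq r
    (q := 12 * (2 * r + 3)) (by omega) (h12.mul_right hN)
  obtain ⟨k, hk⟩ := (Nat.modEq_iff_dvd' hlt.le).1 hmod.symm
  have hpk : p = r + 12 * ((2 * r + 3) * k) := by
    rw [← mul_assoc, ← hk]; omega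
  refine ⟨p, 24 * k + 1, hp, by omega, by omega, ?_⟩
  rw [hpk]; ring

theorem exists_sq_add_eq_two_mul_mul {p : ℕ} {b : ℤ} (hp : Odd p) (hb : Odd b)
    (hsq : IsSquare ((-b : ℤ) : ZMod p)) : ∃ t d : ℤ, t ^ 2 + b = 2 * p * d := by
  obtain ⟨w, hw⟩ := hsq
  obtain ⟨u, rfl⟩ := ZMod.intCast_surjective w
  have hu : (p : ℤ) ∣ u ^ 2 + b := by
    rw [← ZMod.intCast_zmod_eq_zero_iff_dvd]
    push_cast at hw ⊢
    linear_combination -hw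
  obtain ⟨t, htodd, ht⟩ : ∃ t : ℤ, Odd t ∧ (p : ℤ) ∣ t ^ 2 + b := by
    rcases Int.even_or_odd u with heven | hodd
    · refine ⟨u + p, heven.add_odd (by exact_mod_cast hp), ?_⟩
      rw [show (u + p) ^ 2 + b = u ^ 2 + b + p * (2 * u + p) by ring]
      exact dvd_add hu (dvd_mul_right _ _)
    · exact ⟨u, hodd, hu⟩
  have htwo : (2 : ℤ) ∣ t ^ 2 + b := (htodd.pow.add_odd hb).two_dvd
  have hcop : IsCoprime (2 : ℤ) p := by
    exact_mod_cast Nat.isCoprime_iff_coprime.2 (Nat.coprime_two_left.2 hp)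
  exact ⟨t, hcop.mul_dvd htwo ht⟩

theorem exists_sq_add_sq_add_three_mul_sq_eq_of_mod_eight_eq_five {N : ℕ} (h8 : N % 8 = 5)
    (h3 : ¬ 3 ∣ N) : ∃ x y z : ℤ, x ^ 2 + y ^ 2 + 3 * z ^ 2 = N := by
  obtain ⟨p, b, hp, hp4, hb, hbN⟩ := exists_prime_mul_eq_two_mul_add_three h8 h3
  have : Fact p.Prime := ⟨hp⟩
  have hsq := ZMod.isSquare_of_jacobiSym_eq_one (jacobiSym_neg_eq_one hp4 hb hbN)
  obtain ⟨t, d, htd⟩ := exists_sq_add_eq_two_mul_mul (Nat.odd_iff.2 (by omega))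
    (Int.odd_iff.2 (by omega)) hsq
  obtain ⟨A, hA, hdet, hdiag, hminor, hN⟩ := exists_posDef_det_eq_mem_range (N := (N : ℤ))
    (by have := hp.pos; omega) (by omega) three_pos htd (by exact_mod_cast hbN)
  have hdvd : ¬ 3 ∣ A 0 0 := by
    have hp3 : p ≠ 3 := by omega
    have := (Nat.prime_dvd_prime_iff_eq Nat.prime_three hp).not.2 hp3.symm
    omega
  have hmod : principalMinor A 0 1 ≡ 1 [ZMOD 3] := by
    rw [hminor, Int.ModEq]
    omega
  have hsix := six_notMem_range_of_det_eq_three (isHermitian_iff_isSymm.1 hA.isHermitian)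
    hdet hdvd hmod
  exact exists_sq_add_sq_add_three_mul_sq_eq_of_six_notMem_range hA hdet hsix hN

/-! ### Adjusting the residues modulo 2 and 3 -/

theorem exists_odd_sq_add_three_mul_sq_eq {y z : ℤ} (h : (y ^ 2 + 3 * z ^ 2) % 8 = 4) :
    ∃ y' z' : ℤ, Odd y' ∧ Odd z' ∧ y' ^ 2 + 3 * z' ^ 2 = y ^ 2 + 3 * z ^ 2 := by
  have hparity : Even y ↔ Even z := by
    have heven : Even (y ^ 2 + 3 * z ^ 2) := Int.even_iff.2 (by omega)
    simpa [Int.even_add, Int.even_mul, Int.even_pow, show ¬ Even (3 : ℤ) by decide] using heven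
  by_cases hy : Even y
  · obtain ⟨q, rfl⟩ := hy.two_dvd
    obtain ⟨s, rfl⟩ := (hparity.1 hy).two_dvd
    have hqs : Odd (q + s) := by
      have hodd : Odd (q ^ 2 + 3 * s ^ 2) := Int.odd_iff.2 (by grind)
      simpa [Int.odd_add, ← Int.not_odd_iff_even, Int.odd_mul, Int.odd_pow,
        show Odd (3 : ℤ) by decide] using hodd
    have hqs' : q - 3 * s = q + s - 2 * (2 * s) := by ring
    -- `(2 q + 2 s √-3) (1 + √-3) / 2`
    exact ⟨q - 3 * s, q + s, hqs' ▸ hqs.sub_even (even_two_mul _), hqs, by ring⟩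
  · exact ⟨y, z, Int.not_even_iff_odd.1 hy, Int.not_even_iff_odd.1 (hparity.not.1 hy), rfl⟩

theorem exists_odd_sq_add_sq_add_three_mul_sq_eq {x y z : ℤ}
    (h : (x ^ 2 + y ^ 2 + 3 * z ^ 2) % 8 = 5) :
    ∃ x' y' z' : ℤ, Odd x' ∧ Odd y' ∧ Odd z' ∧
      x' ^ 2 + y' ^ 2 + 3 * z' ^ 2 = x ^ 2 + y ^ 2 + 3 * z ^ 2 := by
  wlog hx : Odd x generalizing x y
  · have hy : Odd y := by
      by_contra hy
      obtain ⟨q, rfl⟩ := (Int.not_odd_iff_even.1 hx).two_dvd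
      obtain ⟨r, rfl⟩ := (Int.not_odd_iff_even.1 hy).two_dvd
      rcases Int.even_or_odd' z with ⟨s, rfl | rfl⟩ <;> ring_nf at h <;> omega
    obtain ⟨x', y', z', hodd⟩ := this (x := y) (y := x) (by rwa [add_comm (y ^ 2)]) hy
    exact ⟨x', y', z', by rwa [add_comm (x ^ 2)]⟩
  obtain ⟨k, hk⟩ := Int.eight_dvd_sq_sub_one_of_odd hx
  obtain ⟨y', z', hy', hz', heq⟩ :=
    exists_odd_sq_add_three_mul_sq_eq (y := y) (z := z) (by omega)
  exact ⟨x, y', z', hx, hy', hz', by linarith⟩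

theorem exists_odd_not_three_dvd_sq_add_three_mul_sq_eq {y z : ℤ} (hy : Odd y) (hz : Odd z)
    (h3 : ¬ 3 ∣ z) : ∃ y' z' : ℤ, Odd y' ∧ Odd z' ∧ ¬ 3 ∣ y' ∧
      3 * y' ^ 2 + z' ^ 2 = 3 * y ^ 2 + z ^ 2 := by
  by_cases hy3 : 3 ∣ y
  · obtain ⟨q, hq⟩ := (hz.sub_odd hy).two_dvd
    obtain rfl : z = 2 * q + y := by linarith
    -- `(z + y √-3) (1 + √-3) / 2` or `(z + y √-3) (1 - √-3) / 2`, according to parity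
    rcases Int.even_or_odd q with heven | hodd
    · exact ⟨q + y, q - y, heven.add_odd hy, heven.sub_odd hy, by omega, by ring⟩
    · exact ⟨q, q + 2 * y, hodd, hodd.add_even (even_two_mul y), by omega, by ring⟩
  · exact ⟨y, z, hy, hz, hy3, rfl⟩

theorem sq_emod_three_eq_one {x : ℤ} (hx : ¬ 3 ∣ x) : x ^ 2 % 3 = 1 :=
  Int.ModEq.pow_card_sub_one_eq_one Nat.prime_three
    (Int.prime_three.coprime_iff_not_dvd.2 hx).symm

theorem exists_odd_nine_mul_sq_add_three_mul_sq_add_sq_eq {x y z : ℤ}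
    (h8 : (x ^ 2 + y ^ 2 + 3 * z ^ 2) % 8 = 5) (h3 : (x ^ 2 + y ^ 2 + 3 * z ^ 2) % 3 = 1) :
    ∃ X Y Z : ℤ, Odd X ∧ Odd Y ∧ Odd Z ∧ ¬ 3 ∣ Y ∧
      9 * X ^ 2 + 3 * Y ^ 2 + Z ^ 2 = x ^ 2 + y ^ 2 + 3 * z ^ 2 := by
  obtain ⟨x, y, z, hx, hy, hz, h⟩ := exists_odd_sq_add_sq_add_three_mul_sq_eq h8
  rw [← h] at h3 ⊢
  clear h h8
  wlog hx3 : 3 ∣ x generalizing x y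
  · have hy3 : 3 ∣ y := by
      by_contra hy3
      have hx1 := sq_emod_three_eq_one hx3
      have hy1 := sq_emod_three_eq_one hy3
      omega
    rw [add_comm (x ^ 2)] at h3 ⊢
    exact this y x h3 hy hx hy3
  obtain ⟨X, rfl⟩ := hx3
  have hy3 : ¬ 3 ∣ y := by
    rintro ⟨w, rfl⟩
    ring_nf at h3
    omega
  obtain ⟨Y, Z, hY, hZ, hY3, heq⟩ := exists_odd_not_three_dvd_sq_add_three_mul_sq_eq hz hy hy3
  exact ⟨X, Y, Z, (Int.odd_mul.1 hx).2, hY, hZ, hY3, by linarith⟩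

/-! ### Completing the squares -/

theorem eight_mul_p3_add_one (x : ℤ) : 8 * p3 x + 1 = (2 * x + 1) ^ 2 := by
  have hdvd : 2 ∣ x ^ 2 + x := (by simp [parity_simps] : Even (x ^ 2 + x)).two_dvd
  have h : 2 * p3 x = x ^ 2 + x := Int.mul_ediv_cancel' hdvd
  linear_combination 4 * h

theorem twentyFour_mul_p5_add_one (x : ℤ) : 24 * p5 x + 1 = (6 * x - 1) ^ 2 := by
  have hdvd : 2 ∣ 3 * x ^ 2 - x :=
    (by simp [parity_simps, show ¬ Even (3 : ℤ) by decide] : Even (3 * x ^ 2 - x)).two_dvd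
  have h : 2 * p5 x = 3 * x ^ 2 - x := Int.mul_ediv_cancel' hdvd
  linear_combination 12 * h

theorem seventyTwo_mul_p11_add_fortyNine (x : ℤ) : 72 * p11 x + 49 = (18 * x - 7) ^ 2 := by
  have hdvd : 2 ∣ 9 * x ^ 2 - 7 * x :=
    (by simp [parity_simps, show ¬ Even (9 : ℤ) by decide, show ¬ Even (7 : ℤ) by decide] :
      Even (9 * x ^ 2 - 7 * x)).two_dvd
  have h : 2 * p11 x = 9 * x ^ 2 - 7 * x := Int.mul_ediv_cancel' hdvd
  linear_combination 36 * h

theorem exists_eight_mul_p3_add_one_eq_sq {x : ℤ} (hodd : Odd x) : ∃ k, 8 * p3 k + 1 = x ^ 2 := by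
  obtain ⟨k, rfl⟩ := hodd
  exact ⟨k, eight_mul_p3_add_one k⟩

theorem exists_twentyFour_mul_p5_add_one_eq_sq {y : ℤ} (hodd : Odd y) (h3 : ¬ 3 ∣ y) :
    ∃ k, 24 * p5 k + 1 = y ^ 2 := by
  have hmod : y % 6 = 1 ∨ y % 6 = 5 := by
    have := Int.odd_iff.1 hodd
    omega
  rcases hmod with h | h
  · exact ⟨-(y / 6), by rw [twentyFour_mul_p5_add_one, ← neg_sq]; congr 1; omega⟩
  · exact ⟨y / 6 + 1, by rw [twentyFour_mul_p5_add_one]; congr 1; omega⟩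

theorem exists_seventyTwo_mul_p11_add_fortyNine_eq_sq {z : ℤ} (hodd : Odd z)
    (h9 : z ^ 2 % 9 = 4) : ∃ k, 72 * p11 k + 49 = z ^ 2 := by
  have hmod9 : z % 9 = 2 ∨ z % 9 = 7 := by
    rw [sq, Int.mul_emod] at h9
    have hlower := Int.emod_nonneg z (by decide : (9 : ℤ) ≠ 0)
    have hupper := Int.emod_lt_of_pos z (by decide : (0 : ℤ) < 9)
    generalize z % 9 = w at *
    interval_cases w <;> omega
  have hmod : z % 18 = 7 ∨ z % 18 = 11 := by
    have := Int.odd_iff.1 hodd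
    omega
  rcases hmod with h | h
  · exact ⟨-(z / 18), by rw [seventyTwo_mul_p11_add_fortyNine, ← neg_sq]; congr 1; omega⟩
  · exact ⟨z / 18 + 1, by rw [seventyTwo_mul_p11_add_fortyNine]; congr 1; omega⟩

theorem p3_add_p5_add_p11_universal (n : ℕ) :
    ∃ x y z : ℤ, (n : ℤ) = p3 x + p5 y + p11 z := by
  obtain ⟨x, y, z, hxyz⟩ := exists_sq_add_sq_add_three_mul_sq_eq_of_mod_eight_eq_five
    (N := 72 * n + 61) (by omega) (by omega)
  push_cast at hxyz
  obtain ⟨X, Y, Z, hX, hY, hZ, hY3, hXYZ⟩ :=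
    exists_odd_nine_mul_sq_add_three_mul_sq_add_sq_eq (x := x) (y := y) (z := z)
      (by omega) (by omega)
  obtain ⟨j, hj⟩ := exists_eight_mul_p3_add_one_eq_sq hX
  obtain ⟨k, hk⟩ := exists_twentyFour_mul_p5_add_one_eq_sq hY hY3
  obtain ⟨l, hl⟩ := exists_seventyTwo_mul_p11_add_fortyNine_eq_sq hZ (by omega)
  exact ⟨j, k, l, by linarith⟩
end

section
/- Let w be an integer of the form w = x² + 3y² with x, y ∈ ℤ, and suppose w ≡ 4 (mod 8). Then there exist odd integers u and v such that w = u² + 3v². -/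
/-! Since `w` is even, `x` and `y` have the same parity. If both are even, then `w` is four times
the norm of `(x / 2) + (y / 2)√-3`, and this norm is odd because `8 ∤ w`. Multiplying `x + y√-3` by
the Eisenstein unit `(1 - √-3) / 2` preserves its norm `w` and makes both coordinates odd. -/

theorem four_mul_sq_add_three_mul_sq {R : Type*} [CommRing R] (a b : R) :
    4 * (a ^ 2 + 3 * b ^ 2) = (a + 3 * b) ^ 2 + 3 * (a - b) ^ 2 := by
  ring

theorem even_sq_add_three_mul_sq_iff {x y : ℤ} :
    Even (x ^ 2 + 3 * y ^ 2) ↔ (Even x ↔ Even y) := by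
  have not_even_three : ¬Even (3 : ℤ) := by decide
  simp [Int.even_add, Int.even_mul, Int.even_pow, not_even_three]

theorem odd_sq_add_three_mul_sq_iff {x y : ℤ} :
    Odd (x ^ 2 + 3 * y ^ 2) ↔ Odd (x - y) := by
  rw [← Int.not_even_iff_odd, ← Int.not_even_iff_odd, even_sq_add_three_mul_sq_iff, Int.even_sub]

theorem exists_odd_odd_four_mul_eq_sq_add_three_mul_sq {a b : ℤ}
    (h : Odd (a ^ 2 + 3 * b ^ 2)) :
    ∃ u v : ℤ, Odd u ∧ Odd v ∧ 4 * (a ^ 2 + 3 * b ^ 2) = u ^ 2 + 3 * v ^ 2 := by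
  have odd_sub : Odd (a - b) := odd_sq_add_three_mul_sq_iff.mp h
  have odd_add : Odd (a + 3 * b) := by
    rw [show a + 3 * b = (a - b) + 2 * (2 * b) by ring]
    exact odd_sub.add_even (even_two_mul _)
  exact ⟨a + 3 * b, a - b, odd_add, odd_sub, four_mul_sq_add_three_mul_sq a b⟩

theorem sq_add_three_sq_of_mod_eight (w x y : ℤ) (hw : w = x ^ 2 + 3 * y ^ 2)
    (hmod : w % 8 = 4) :
    ∃ u v : ℤ, Odd u ∧ Odd v ∧ w = u ^ 2 + 3 * v ^ 2 := by
  have same_parity : Even x ↔ Even y := by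
    rw [← even_sq_add_three_mul_sq_iff, ← hw, Int.even_iff]
    omega
  rcases Int.even_or_odd x with hx | hx
  · obtain ⟨a, rfl⟩ := hx.two_dvd
    obtain ⟨b, rfl⟩ := (same_parity.mp hx).two_dvd
    have w_eq : w = 4 * (a ^ 2 + 3 * b ^ 2) := by rw [hw]; ring
    have odd_quarter : Odd (a ^ 2 + 3 * b ^ 2) := by
      rw [Int.odd_iff]
      omega
    rw [w_eq]
    exact exists_odd_odd_four_mul_eq_sq_add_three_mul_sq odd_quarter
  · have hy : Odd y := by rwa [← Int.not_even_iff_odd, ← same_parity, Int.not_even_iff_odd]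
    exact ⟨x, y, hx, hy, hw⟩
end

section
/- Let w be an integer of the form w = x² + 3y² where x and y are odd integers and 3 does not divide x. Then there exist integers u and v, each relatively prime to 6, such that w = u² + 3v². -/
/-!
Only the case `3 ∣ y` needs work. The norm `x² + 3y²` of `x + y√-3` is unchanged by replacing `y`
with `-y` and by multiplying with the unit `(1 + √-3) / 2` of the Eisenstein integers, which sends
`(x, y)` to `((x - 3y) / 2, (x + y) / 2)`. Odd `x` and `y` satisfy `x ≡ ±y` mod `4`; choosing the
sign of `y` so that `x ≡ y`, both new coordinates are odd, and modulo `3` both are `x / 2 ≠ 0`.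
-/

theorem gcd_six_eq_one_iff {u : ℤ} : Int.gcd u 6 = 1 ↔ Odd u ∧ ¬ (3 : ℤ) ∣ u := by
  rw [← Int.isCoprime_iff_gcd_eq_one, show (6 : ℤ) = 2 * 3 by norm_num, IsCoprime.mul_right_iff,
    Int.isCoprime_two_right, isCoprime_comm, Int.prime_three.coprime_iff_not_dvd]

-- With `x = y + 2m`, the right-hand coordinates are `(x - 3y) / 2` and `(x + y) / 2`.
theorem add_two_mul_sq_add_three_mul_sq {R : Type*} [CommRing R] (y m : R) :
    (y + 2 * m) ^ 2 + 3 * y ^ 2 = (m - y) ^ 2 + 3 * (m + y) ^ 2 := by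
  ring

theorem exists_coprime_six_of_four_dvd_sub {x y : ℤ} (hy : Odd y) (hxy : 4 ∣ x - y)
    (hx3 : ¬ (3 : ℤ) ∣ x) (hy3 : 3 ∣ y) :
    ∃ u v : ℤ, Int.gcd u 6 = 1 ∧ Int.gcd v 6 = 1 ∧ x ^ 2 + 3 * y ^ 2 = u ^ 2 + 3 * v ^ 2 := by
  obtain ⟨k, hk⟩ := hxy
  obtain rfl : x = y + 2 * (2 * k) := by linarith
  have hk3 : ¬ (3 : ℤ) ∣ k := fun h ↦ hx3 (by omega)
  have hk2 : Even (2 * k) := even_two_mul k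
  exact ⟨2 * k - y, 2 * k + y,
    gcd_six_eq_one_iff.mpr ⟨hk2.sub_odd hy, by omega⟩,
    gcd_six_eq_one_iff.mpr ⟨hk2.add_odd hy, by omega⟩,
    add_two_mul_sq_add_three_mul_sq y (2 * k)⟩

theorem sq_add_three_sq_coprime_six (w x y : ℤ) (hw : w = x ^ 2 + 3 * y ^ 2)
    (hx : Odd x) (hy : Odd y) (h3 : ¬ (3 : ℤ) ∣ x) :
    ∃ u v : ℤ, Int.gcd u 6 = 1 ∧ Int.gcd v 6 = 1 ∧ w = u ^ 2 + 3 * v ^ 2 := by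
  subst hw
  by_cases hy3 : 3 ∣ y
  · rcases Int.four_dvd_add_or_sub_of_odd hx hy with hadd | hsub
    · rw [← neg_sq y]
      exact exists_coprime_six_of_four_dvd_sub hy.neg (by rwa [sub_neg_eq_add]) h3 hy3.neg_right
    · exact exists_coprime_six_of_four_dvd_sub hy hsub h3 hy3
  · exact ⟨x, y, gcd_six_eq_one_iff.mpr ⟨hx, h3⟩, gcd_six_eq_one_iff.mpr ⟨hy, hy3⟩, rfl⟩
end

section
/- For every nonnegative integer n, there exist integers x, y, z, each relatively prime to 6, such that 24n + 6 = x² + 2y² + 3z². -/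
/-!
Six times a sum of three squares is a value of `x ^ 2 + 2 * y ^ 2 + 3 * z ^ 2`, because
`6 (p² + q² + v²) = 3 (p + q)² + 3 ((p - q)² + 2 v²)` and
`3 (X² + 2 Y²) = (X - 2 Y)² + 2 (X + Y)²`. So one starts from `4 n + 1 = p² + q² + v²`.

For the three squares, Hermite's inequality shows that a positive definite integral form of
determinant one in at most five variables represents one, hence by induction is a sum of squares.
Dirichlet's theorem provides a prime `p` with `2 p + 1 = b (4 n + 1)` and `b ≡ 3 [MOD 8]`; quadratic
reciprocity makes `-b` a square modulo `2 p`, and this yields a ternary form of determinant one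
that represents `4 n + 1`.

It remains to choose the representations coprime to `6`. Oddness is forced modulo `4`. A common
factor `3` of a representation is removed by a rational isometry of denominator `3`: a reflection
for `x² + y² + z²`, and multiplication by an element of norm one of `ℚ(√-2)` for `x² + 2 y²`.
-/

open Matrix

section ScaledSchur

variable {R : Type*} {n : ℕ} [CommRing R]

/-- The Schur complement of the corner entry of `A`, multiplied by that entry so that no division
occurs. -/
def scaledSchur (A : Matrix (Fin (n + 1)) (Fin (n + 1)) R) : Matrix (Fin n) (Fin n) R :=
  A 0 0 • A.submatrix Fin.succ Fin.succ - vecMulVec (vecTail (A.col 0)) (vecTail (A.row 0))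

/-- The block matrix with rows `(1, k)` and `(0, V)`: the change of basis that keeps the first basis
vector `e`, acts by `V` on the others modulo `e`, and adds the multiples `k` of `e` to them. -/
def unitBlock (k : Fin n → R) (V : Matrix (Fin n) (Fin n) R) :
    Matrix (Fin (n + 1)) (Fin (n + 1)) R :=
  of (vecCons (vecCons 1 k) fun i => vecCons 0 (V i))

theorem scaledSchur_apply (A : Matrix (Fin (n + 1)) (Fin (n + 1)) R) (i j : Fin n) :
    scaledSchur A i j = A 0 0 * A i.succ j.succ - A i.succ 0 * A 0 j.succ := rfl

theorem det_unitBlock (k : Fin n → R) (V : Matrix (Fin n) (Fin n) R) :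
    (unitBlock k V).det = V.det := by
  have block : (unitBlock k V).submatrix Fin.succ Fin.succ = V := rfl
  have corner : unitBlock k V 0 0 = 1 := rfl
  have col_zero (i : Fin n) : unitBlock k V i.succ 0 = 0 := rfl
  simp [det_succ_column_zero, Fin.sum_univ_succ, block, corner, col_zero]

theorem corner_mul_det_scaledSchur (A : Matrix (Fin (n + 1)) (Fin (n + 1)) R) :
    A 0 0 * (scaledSchur A).det = A 0 0 ^ n * A.det := by
  set P := A * unitBlock (fun j => -A 0 j.succ) (A 0 0 • 1) with hP
  have corner : P 0 0 = A 0 0 := by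
    simp [P, unitBlock, mul_apply, Fin.sum_univ_succ]
  have row_zero (j : Fin n) : P 0 j.succ = 0 := by
    simp [P, unitBlock, mul_apply, Fin.sum_univ_succ, one_apply, mul_comm]
  have block : P.submatrix Fin.succ Fin.succ = scaledSchur A := by
    ext i j
    simp [P, unitBlock, scaledSchur_apply, mul_apply, Fin.sum_univ_succ, one_apply,
      neg_add_eq_sub, mul_comm (A 0 0)]
  calc A 0 0 * (scaledSchur A).det = P.det := by
        simp [det_succ_row_zero P, Fin.sum_univ_succ, row_zero, corner, block]
    _ = A 0 0 ^ n * A.det := by simp [hP, det_unitBlock, mul_comm]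

theorem corner_mul_dotProduct_mulVec (A : Matrix (Fin (n + 1)) (Fin (n + 1)) R)
    (x y : Fin (n + 1) → R) :
    A 0 0 * (x ⬝ᵥ A *ᵥ y) =
      (x ⬝ᵥ A.col 0) * (A.row 0 ⬝ᵥ y) + vecTail x ⬝ᵥ scaledSchur A *ᵥ vecTail y := by
  have dotProduct_succ (u v : Fin (n + 1) → R) : u ⬝ᵥ v = u 0 * v 0 + vecTail u ⬝ᵥ vecTail v :=
    Fin.sum_univ_succ _
  have mulVec_zero : (A *ᵥ y) 0 = A.row 0 ⬝ᵥ y := rfl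
  have mulVec_tail : vecTail (A *ᵥ y) =
      y 0 • vecTail (A.col 0) + A.submatrix Fin.succ Fin.succ *ᵥ vecTail y := by
    ext i
    simp [mulVec, dotProduct, vecTail, Fin.sum_univ_succ, mul_comm]
  simp only [scaledSchur, sub_mulVec, smul_mulVec, vecMulVec_mulVec, dotProduct_succ x,
    dotProduct_succ (A.row 0), mulVec_zero, mulVec_tail, dotProduct_add, dotProduct_sub,
    dotProduct_smul, op_smul_eq_smul, smul_eq_mul, row_apply, col_apply]
  ring

theorem scaledSchur_transpose_mul_mul_unitBlock (A : Matrix (Fin (n + 1)) (Fin (n + 1)) R)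
    (k : Fin n → R) (V : Matrix (Fin n) (Fin n) R) :
    scaledSchur ((unitBlock k V)ᵀ * A * unitBlock k V) = Vᵀ * scaledSchur A * V := by
  set U := unitBlock k V
  have col_zero : Uᵀ 0 = Pi.single 0 1 := by
    ext i
    cases i using Fin.cases <;> simp [U, unitBlock]
  ext i j
  have key : A 0 0 * (Uᵀ i.succ ⬝ᵥ A *ᵥ Uᵀ j.succ) = (Uᵀ i.succ ⬝ᵥ A.col 0) *
      (A.row 0 ⬝ᵥ Uᵀ j.succ) + Vᵀ i ⬝ᵥ scaledSchur A *ᵥ Vᵀ j :=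
    corner_mul_dotProduct_mulVec A (Uᵀ i.succ) (Uᵀ j.succ)
  simp only [scaledSchur_apply, mul_mul_apply, col_zero, mulVec_single_one,
    single_one_dotProduct, col_apply]
  rw [key]
  exact add_sub_cancel_left _ _

theorem isHermitian_scaledSchur [StarRing R] [TrivialStar R]
    {A : Matrix (Fin (n + 1)) (Fin (n + 1)) R} (hA : A.IsHermitian) :
    (scaledSchur A).IsHermitian := by
  have symm (i j) : A i j = A j i := by simpa using (hA.apply j i)
  refine IsHermitian.ext fun i j => ?_
  simp only [scaledSchur_apply, star_trivial, symm j.succ i.succ, symm j.succ 0, symm 0 i.succ]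
  ring

variable [LinearOrder R] [IsStrictOrderedRing R] [StarRing R] [TrivialStar R]

theorem posDef_scaledSchur {A : Matrix (Fin (n + 1)) (Fin (n + 1)) R} (hA : A.PosDef) :
    (scaledSchur A).PosDef := by
  have corner_pos : 0 < A 0 0 := hA.diag_pos
  refine .of_dotProduct_mulVec_pos (isHermitian_scaledSchur hA.isHermitian) fun x hx => ?_
  -- `y` lifts `A 0 0 • x` to a vector orthogonal to the first basis vector.
  set y : Fin (n + 1) → R := vecCons (-(vecTail (A.row 0) ⬝ᵥ x)) (A 0 0 • x) with hy
  have hy0 : y ≠ 0 := by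
    intro h0
    refine hx (funext fun i => ?_)
    simpa [y, corner_pos.ne'] using congrFun h0 i.succ
  have orthogonal : A.row 0 ⬝ᵥ y = 0 := by
    simp [y, dotProduct, Fin.sum_univ_succ, vecTail, Finset.mul_sum, mul_left_comm]
  have key : y ⬝ᵥ A *ᵥ y = A 0 0 * (x ⬝ᵥ scaledSchur A *ᵥ x) := by
    refine mul_left_cancel₀ corner_pos.ne' ?_
    rw [corner_mul_dotProduct_mulVec, orthogonal, hy]
    simp [mulVec_smul]
  have form_pos := hA.dotProduct_mulVec_pos hy0
  rw [star_trivial, key] at form_pos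
  rw [star_trivial]
  exact pos_of_mul_pos_right form_pos corner_pos.le

theorem posDef_of_posDef_scaledSchur {A : Matrix (Fin (n + 1)) (Fin (n + 1)) R}
    (hA : A.IsHermitian) (corner_pos : 0 < A 0 0) (hS : (scaledSchur A).PosDef) : A.PosDef := by
  refine .of_dotProduct_mulVec_pos hA fun x hx => ?_
  have col_eq_row : A.col 0 = A.row 0 := funext fun i => by simpa using (hA.apply i 0).symm
  rw [star_trivial, ← mul_pos_iff_of_pos_left corner_pos, corner_mul_dotProduct_mulVec,
    col_eq_row, dotProduct_comm x]
  by_cases hx' : vecTail x = 0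
  · have tail_zero (i : Fin n) : x i.succ = 0 := congrFun hx' i
    have hx0 : x 0 ≠ 0 := fun h0 => hx (funext (Fin.cases h0 tail_zero))
    have row_dot : A.row 0 ⬝ᵥ x = A 0 0 * x 0 := by
      simp [dotProduct, Fin.sum_univ_succ, tail_zero]
    simpa [hx', row_dot] using mul_self_pos.mpr (mul_ne_zero corner_pos.ne' hx0)
  · have schur_pos := hS.dotProduct_mulVec_pos hx'
    rw [star_trivial] at schur_pos
    exact add_pos_of_nonneg_of_pos (mul_self_nonneg _) schur_pos

theorem posDef_fin_two {a b c : R} (ha : 0 < a) (hdet : 0 < a * c - b * b) :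
    (!![a, b; b, c]).PosDef := by
  have symm : (!![a, b; b, c]).IsHermitian := by
    ext i j
    fin_cases i <;> fin_cases j <;> simp
  refine posDef_of_posDef_scaledSchur symm ha (posDef_of_posDef_scaledSchur
    (isHermitian_scaledSchur symm) (by simpa [scaledSchur_apply] using hdet) ?_)
  exact .of_dotProduct_mulVec_pos (Subsingleton.elim _ _)
    fun x hx => (hx (Subsingleton.elim x 0)).elim

end ScaledSchur

section IsCongruent

variable {ι R : Type*} [Fintype ι] [DecidableEq ι] [CommRing R]

/-- Two Gram matrices are congruent when they describe the same bilinear form in two bases of the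
same free module; the change of basis `U` is invertible over `R` itself. -/
def IsCongruent (A B : Matrix ι ι R) : Prop :=
  ∃ U : Matrix ι ι R, IsUnit U ∧ Uᵀ * A * U = B

namespace IsCongruent

theorem refl (A : Matrix ι ι R) : IsCongruent A A := ⟨1, isUnit_one, by simp⟩

theorem symm {A B : Matrix ι ι R} (h : IsCongruent A B) : IsCongruent B A := by
  obtain ⟨_, ⟨U, rfl⟩, rfl⟩ := h
  refine ⟨U⁻¹.val, U⁻¹.isUnit, ?_⟩
  calc (U⁻¹.val)ᵀ * ((U.val)ᵀ * A * U.val) * U⁻¹.val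
      = (U.val * U⁻¹.val)ᵀ * A * (U.val * U⁻¹.val) := by
        simp only [transpose_mul, Matrix.mul_assoc]
    _ = A := by simp only [U.mul_inv, transpose_one, Matrix.one_mul, Matrix.mul_one]

theorem trans {A B C : Matrix ι ι R} (hAB : IsCongruent A B) (hBC : IsCongruent B C) :
    IsCongruent A C := by
  obtain ⟨U, hU, rfl⟩ := hAB
  obtain ⟨V, hV, rfl⟩ := hBC
  exact ⟨U * V, hU.mul hV, by simp [Matrix.mul_assoc]⟩

theorem submatrix_equiv (A : Matrix ι ι R) (σ : Equiv.Perm ι) :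
    IsCongruent A (A.submatrix σ σ) := by
  refine ⟨(1 : Matrix ι ι R).submatrix (Equiv.refl ι) σ,
    (isUnit_submatrix_equiv _ _).mpr isUnit_one, ?_⟩
  ext
  simp [mul_apply, one_apply]

theorem det_eq {A B : Matrix ι ι ℤ} (h : IsCongruent A B) : B.det = A.det := by
  obtain ⟨U, hU, rfl⟩ := h
  rw [isUnit_iff_isUnit_det] at hU
  rw [det_mul, det_mul, det_transpose, mul_right_comm, Int.isUnit_mul_self hU, one_mul]

theorem posDef [PartialOrder R] [StarRing R] [TrivialStar R] {A B : Matrix ι ι R}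
    (h : IsCongruent A B) (hA : A.PosDef) : B.PosDef := by
  obtain ⟨U, hU, rfl⟩ := h
  simpa [star_eq_conjTranspose] using (IsUnit.posDef_star_left_conjugate_iff hU).mpr hA

theorem exists_diag_eq_sum_sq {A : Matrix ι ι R} (h : IsCongruent A 1) (i : ι) :
    ∃ x : ι → R, A i i = ∑ j, x j ^ 2 := by
  obtain ⟨U, -, rfl⟩ := h.symm
  exact ⟨fun j => U j i, by simp [mul_apply, sq]⟩

end IsCongruent

theorem exists_two_mul_abs_add_mul_le (b : ℤ) {a : ℤ} (ha : 0 < a) : ∃ k, 2 * |a * k + b| ≤ a := by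
  have ha' : (0 : ℚ) < a := mod_cast ha
  refine ⟨-round (b / a : ℚ), ?_⟩
  qify
  have factor : (a : ℚ) * (-round (b / a : ℚ) : ℤ) + b = a * (b / a - round (b / a : ℚ)) := by
    push_cast
    field_simp
    ring
  calc 2 * |(a : ℚ) * (-round (b / a : ℚ) : ℤ) + b|
      = 2 * (a * |(b / a : ℚ) - round (b / a : ℚ)|) := by rw [factor, abs_mul, abs_of_pos ha']
    _ ≤ 2 * (a * (1 / 2)) := by gcongr; exact abs_sub_round _
    _ = a := by ring

variable {n : ℕ}

theorem exists_isCongruent_scaledSchur_eq {A : Matrix (Fin (n + 1)) (Fin (n + 1)) ℤ}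
    (hA : A.PosDef) {T : Matrix (Fin n) (Fin n) ℤ} (hT : IsCongruent (scaledSchur A) T) :
    ∃ B, IsCongruent A B ∧ B 0 0 = A 0 0 ∧ scaledSchur B = T ∧
      ∀ j : Fin n, 2 * |B 0 j.succ| ≤ A 0 0 := by
  obtain ⟨V, hV, rfl⟩ := hT
  choose k hk using fun j => exists_two_mul_abs_add_mul_le ((vecTail (A.row 0) ᵥ* V) j) hA.diag_pos
  refine ⟨(unitBlock k V)ᵀ * A * unitBlock k V, ⟨unitBlock k V, ?_, rfl⟩, ?_,
    scaledSchur_transpose_mul_mul_unitBlock A k V, fun j => ?_⟩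
  · rwa [isUnit_iff_isUnit_det, det_unitBlock, ← isUnit_iff_isUnit_det]
  · simp [mul_apply, Fin.sum_univ_succ, unitBlock]
  · convert hk j using 3
    simp [mul_apply, Fin.sum_univ_succ, unitBlock, vecMul, dotProduct, vecTail]

theorem exists_isCongruent_corner_minimal {A : Matrix (Fin (n + 1)) (Fin (n + 1)) ℤ}
    (hA : A.PosDef) : ∃ B, IsCongruent A B ∧ ∀ C, IsCongruent A C → B 0 0 ≤ C 0 0 := by
  obtain ⟨B, hB, hmin⟩ := exists_minimalFor_of_wellFoundedLT (IsCongruent A)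
    (fun B => (B 0 0).toNat) ⟨A, .refl A⟩
  refine ⟨B, hB, fun C hC => ?_⟩
  have B_pos : 0 < B 0 0 := (hB.posDef hA).diag_pos
  have C_pos : 0 < C 0 0 := (hC.posDef hA).diag_pos
  by_contra! hlt
  have := hmin hC (by dsimp only; omega)
  dsimp only at this
  omega

theorem three_mul_sq_corner_le {A : Matrix (Fin (n + 2)) (Fin (n + 2)) ℤ} (hA : A.PosDef)
    (hmin : ∀ B, IsCongruent A B → A 0 0 ≤ B 0 0) {T : Matrix (Fin (n + 1)) (Fin (n + 1)) ℤ}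
    (hT : IsCongruent (scaledSchur A) T) : 3 * A 0 0 ^ 2 ≤ 4 * T 0 0 := by
  obtain ⟨B, hAB, corner, rfl, hred⟩ := exists_isCongruent_scaledSchur_eq hA hT
  have corner_le : A 0 0 ≤ B 1 1 := by
    simpa using hmin _ (hAB.trans (.submatrix_equiv B (Equiv.swap 0 1)))
  have off_diag_sq : 4 * B 0 1 ^ 2 ≤ A 0 0 ^ 2 := by
    simpa [mul_pow] using pow_le_pow_left₀ (by positivity) (hred 0) 2
  have symm : B 1 0 = B 0 1 := by
    simpa using (hAB.posDef hA).isHermitian.apply 0 1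
  have corner_pos : 0 < A 0 0 := hA.diag_pos
  rw [scaledSchur_apply, Fin.succ_zero_eq_one, symm, corner]
  nlinarith

/-- Hermite's inequality `B 0 0 ≤ (4 / 3) ^ (n / 2) * A.det ^ (1 / (n + 1))`, cleared of roots and
denominators. -/
theorem exists_isCongruent_pow_corner_le (n : ℕ) {A : Matrix (Fin (n + 1)) (Fin (n + 1)) ℤ}
    (hA : A.PosDef) : ∃ B, IsCongruent A B ∧
      3 ^ (n + 1).choose 2 * B 0 0 ^ (n + 1) ≤ 4 ^ (n + 1).choose 2 * A.det := by
  induction n with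
  | zero => exact ⟨A, .refl A, by simp⟩
  | succ n ih =>
    obtain ⟨B, hAB, hmin⟩ := exists_isCongruent_corner_minimal hA
    have hB := hAB.posDef hA
    obtain ⟨T, hT, hTdet⟩ := ih (posDef_scaledSchur hB)
    have corner_sq_le : 3 * B 0 0 ^ 2 ≤ 4 * T 0 0 :=
      three_mul_sq_corner_le hB (fun C hC => hmin C (hAB.trans hC)) hT
    have corner_pos : 0 < B 0 0 := hB.diag_pos
    have det_schur : (scaledSchur B).det = B 0 0 ^ n * A.det := by
      refine mul_left_cancel₀ corner_pos.ne' ?_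
      rw [corner_mul_det_scaledSchur, hAB.det_eq, pow_succ']
      ring
    refine ⟨B, hAB, le_of_mul_le_mul_left ?_ (pow_pos corner_pos n)⟩
    set c := (n + 1).choose 2
    have choose_succ : (n + 1 + 1).choose 2 = n + 1 + c := by
      simp [c, Nat.choose_succ_succ' (n + 1) 1]
    rw [choose_succ]
    calc B 0 0 ^ n * (3 ^ (n + 1 + c) * B 0 0 ^ (n + 1 + 1))
        = 3 ^ c * (3 * B 0 0 ^ 2) ^ (n + 1) := by ring
      _ ≤ 3 ^ c * (4 * T 0 0) ^ (n + 1) := by gcongr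
      _ = 4 ^ (n + 1) * (3 ^ c * T 0 0 ^ (n + 1)) := by ring
      _ ≤ 4 ^ (n + 1) * (4 ^ c * (scaledSchur B).det) := by gcongr
      _ = B 0 0 ^ n * (4 ^ (n + 1 + c) * A.det) := by rw [det_schur]; ring

theorem exists_isCongruent_corner_eq_one {n : ℕ} (hn : n ≤ 4)
    {A : Matrix (Fin (n + 1)) (Fin (n + 1)) ℤ} (hA : A.PosDef) (hdet : A.det = 1) :
    ∃ B, IsCongruent A B ∧ B 0 0 = 1 := by
  obtain ⟨B, hAB, hbound⟩ := exists_isCongruent_pow_corner_le n hA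
  have corner_pos : 0 < B 0 0 := (hAB.posDef hA).diag_pos
  refine ⟨B, hAB, ?_⟩
  by_contra hne
  have two_pow_le : 2 ^ (n + 1) ≤ B 0 0 ^ (n + 1) := by gcongr; omega
  rw [hdet] at hbound
  interval_cases n <;> norm_num [Nat.choose] at hbound two_pow_le <;> omega

theorem isCongruent_one_of_scaledSchur {A : Matrix (Fin (n + 1)) (Fin (n + 1)) ℤ}
    (hA : A.PosDef) (corner : A 0 0 = 1) (hS : IsCongruent (scaledSchur A) 1) :
    IsCongruent A 1 := by
  obtain ⟨B, hAB, corner_eq, schur_eq, hred⟩ := exists_isCongruent_scaledSchur_eq hA hS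
  rw [corner] at corner_eq hred
  have row_zero (j : Fin n) : B 0 j.succ = 0 := by
    have := hred j
    rw [← Int.abs_lt_one_iff]
    omega
  have col_zero (i : Fin n) : B i.succ 0 = 0 := by
    rw [← row_zero i]
    simpa using (hAB.posDef hA).isHermitian.apply 0 i.succ
  have block (i j : Fin n) : B i.succ j.succ = (1 : Matrix (Fin n) (Fin n) ℤ) i j := by
    simp [← schur_eq, scaledSchur_apply, corner_eq, row_zero]
  suffices B = 1 from this ▸ hAB
  ext i j
  cases i using Fin.cases <;> cases j using Fin.cases <;>
    simp [corner_eq, row_zero, col_zero, block, one_apply, (Fin.succ_ne_zero _).symm]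

theorem isCongruent_one_of_det_eq_one {n : ℕ} (hn : n ≤ 5) {A : Matrix (Fin n) (Fin n) ℤ}
    (hA : A.PosDef) (hdet : A.det = 1) : IsCongruent A 1 := by
  induction n with
  | zero => exact Subsingleton.elim A 1 ▸ .refl A
  | succ n ih =>
    obtain ⟨B, hAB, corner⟩ :=
      exists_isCongruent_corner_eq_one (Nat.le_of_succ_le_succ hn) hA hdet
    have hB := hAB.posDef hA
    have det_schur : (scaledSchur B).det = 1 := by
      simpa [corner, hAB.det_eq, hdet] using corner_mul_det_scaledSchur B
    exact hAB.trans (isCongruent_one_of_scaledSchur hB corner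
      (ih (by omega) (posDef_scaledSchur hB) det_schur))

end IsCongruent

theorem exists_sum_three_sq_of_dvd {m b t : ℤ} (hb : 0 < b) (hbm : 1 < b * m)
    (hdvd : b * m - 1 ∣ t ^ 2 + b) : ∃ x y z : ℤ, m = x ^ 2 + y ^ 2 + z ^ 2 := by
  obtain ⟨a, ha⟩ := hdvd
  obtain ⟨q, hq⟩ : ∃ q, q = b * m - 1 := ⟨_, rfl⟩
  rw [← hq] at ha
  have q_pos : 0 < q := by omega
  have minor_eq : q * a - t * t = b := by linear_combination -ha
  -- The leading `2 × 2` minor is `b`, so the determinant is `b * m - q = 1`.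
  let A : Matrix (Fin 3) (Fin 3) ℤ := !![q, t, 0; t, a, 1; 0, 1, m]
  have A_symm : A.IsHermitian := by
    ext i j
    fin_cases i <;> fin_cases j <;> simp [A]
  have schur : scaledSchur A = !![b, q; q, q * m] := by
    ext i j
    fin_cases i <;> fin_cases j <;> simp [A, scaledSchur_apply, minor_eq]
  have schur_det : b * (q * m) - q * q = q := by linear_combination -q * hq
  have A_posDef : A.PosDef :=
    posDef_of_posDef_scaledSchur A_symm q_pos
      (schur ▸ posDef_fin_two hb (schur_det.symm ▸ q_pos))
  have A_det : A.det = 1 := by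
    refine mul_left_cancel₀ (pow_pos q_pos 2).ne' ?_
    have det_schur : q * (scaledSchur A).det = q ^ 2 * A.det := corner_mul_det_scaledSchur A
    rw [schur, det_fin_two_of, schur_det] at det_schur
    linear_combination -det_schur
  obtain ⟨x, hx⟩ :=
    (isCongruent_one_of_det_eq_one (by norm_num) A_posDef A_det).exists_diag_eq_sum_sq 2
  exact ⟨x 0, x 1, x 2, by simpa [A, Fin.sum_univ_three] using hx⟩

theorem jacobiSym_neg_eq_one_of_dvd {p b : ℕ} (hp : Odd p) (hb : b % 8 = 3)
    (hdvd : b ∣ 2 * p + 1) : jacobiSym (-b) p = 1 := by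
  have b_odd : Odd b := Nat.odd_iff.mpr (by omega)
  have neg_two : jacobiSym (-2) b = 1 := by
    rw [jacobiSym.at_neg_two b_odd, ZMod.χ₈'_nat_eq_if_mod_eight, if_neg (by omega),
      if_pos (Or.inr hb)]
  have neg_two_mul : jacobiSym (-2 * p) b = 1 := by
    have : (-2 * p : ℤ) ≡ 1 [ZMOD b] := by
      rw [Int.modEq_iff_dvd]
      have : (b : ℤ) ∣ 2 * p + 1 := mod_cast hdvd
      convert this using 1
      ring
    rw [jacobiSym.mod_left' this, jacobiSym.one_left]
  have p_mod_b : jacobiSym p b = 1 := by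
    rwa [jacobiSym.mul_left, neg_two, one_mul] at neg_two_mul
  rw [jacobiSym.neg _ hp]
  rcases Nat.odd_mod_four_iff.mp (Nat.odd_iff.mp hp) with h4 | h4
  · rw [ZMod.χ₄_nat_one_mod_four h4, jacobiSym.quadratic_reciprocity_one_mod_four' b_odd h4,
      p_mod_b, one_mul]
  · rw [ZMod.χ₄_nat_three_mod_four h4,
      jacobiSym.quadratic_reciprocity_three_mod_four (by omega) h4, p_mod_b]
    norm_num

theorem exists_two_mul_dvd_sq_add {p : ℕ} [Fact p.Prime] (hp : Odd p) {b : ℤ} (hb : Odd b)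
    (hsq : IsSquare ((-b : ℤ) : ZMod p)) : ∃ t : ℤ, (2 * p : ℤ) ∣ t ^ 2 + b := by
  obtain ⟨r, hr⟩ := hsq
  obtain ⟨s, rfl⟩ := ZMod.intCast_surjective r
  have p_dvd : (p : ℤ) ∣ s ^ 2 + b := by
    rw [← ZMod.intCast_zmod_eq_zero_iff_dvd]
    push_cast at hr ⊢
    linear_combination -hr
  have p_odd : Odd (p : ℤ) := mod_cast hp
  have coprime : IsCoprime (2 : ℤ) p :=
    (Int.prime_two.coprime_iff_not_dvd).mpr (Int.not_even_iff_odd.mpr p_odd ∘ even_iff_two_dvd.mpr)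
  rcases Int.even_or_odd s with hs | hs
  · refine ⟨s + p, coprime.mul_dvd ?_ ?_⟩
    · exact (((hs.add_odd p_odd).pow).add_odd hb).two_dvd
    · have : (s + p) ^ 2 + b = s ^ 2 + b + p * (2 * s + p) := by ring
      exact this ▸ p_dvd.add (dvd_mul_right _ _)
  · exact ⟨s, coprime.mul_dvd (hs.pow.add_odd hb).two_dvd p_dvd⟩

theorem exists_prime_two_mul_add_one_eq_mul (n : ℕ) :
    ∃ p b : ℕ, p.Prime ∧ Odd p ∧ b % 8 = 3 ∧ 2 * p + 1 = b * (4 * n + 1) := by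
  have coprime : (6 * n + 1).Coprime (4 * (4 * n + 1)) := by
    rw [← Nat.isCoprime_iff_coprime]
    push_cast
    exact IsCoprime.mul_right ⟨1 - 6 * n, 9 * n ^ 2, by ring⟩ ⟨-2, 3, by ring⟩
  obtain ⟨p, hgt, hp, hmod⟩ := Nat.forall_exists_prime_gt_and_modEq (6 * n + 1)
    (by positivity) coprime
  obtain ⟨v, hv⟩ := (Nat.modEq_iff_dvd' hgt.le).mp hmod.symm
  have p_eq : p = 2 * (2 * (4 * n + 1) * v + 3 * n) + 1 := by
    rw [← Nat.sub_add_cancel hgt.le, hv]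
    ring
  exact ⟨p, 8 * v + 3, hp, ⟨_, p_eq⟩, by omega, by rw [p_eq]; ring⟩

theorem exists_four_mul_add_one_eq_sum_three_sq (n : ℕ) :
    ∃ x y z : ℤ, 4 * (n : ℤ) + 1 = x ^ 2 + y ^ 2 + z ^ 2 := by
  obtain ⟨p, b, hp, p_odd, hb, hpb⟩ := exists_prime_two_mul_add_one_eq_mul n
  have : Fact p.Prime := ⟨hp⟩
  have isSquare : IsSquare ((-b : ℤ) : ZMod p) :=
    ZMod.isSquare_of_jacobiSym_eq_one (jacobiSym_neg_eq_one_of_dvd p_odd hb ⟨_, hpb⟩)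
  have b_odd : Odd (b : ℤ) := by rw [Int.odd_iff]; omega
  obtain ⟨t, ht⟩ := exists_two_mul_dvd_sq_add p_odd b_odd isSquare
  have hpb' : (2 * p + 1 : ℤ) = b * (4 * n + 1) := mod_cast hpb
  have p_pos := hp.pos
  exact exists_sum_three_sq_of_dvd (b := b) (t := t) (by omega) (by omega)
    (by rwa [← hpb', add_sub_cancel_right])

theorem exists_not_forall_dvd_of_smul {ι : Type*} {p : ℤ} (hp : ¬IsUnit p)
    (Q : QuadraticForm ℤ (ι → ℤ))
    (step : ∀ x, ¬(∀ i, p ∣ x i) → ∃ y, ¬(∀ i, p ∣ y i) ∧ Q y = Q (p • x))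
    {x : ι → ℤ} (hx : x ≠ 0) : ∃ y, ¬(∀ i, p ∣ y i) ∧ Q y = Q x := by
  obtain ⟨i, hi⟩ := Function.ne_iff.mp hx
  induction h : (x i).natAbs using Nat.strong_induction_on generalizing x with
  | _ k ih =>
    by_cases hdvd : ∀ i, p ∣ x i
    · choose x' hx' using hdvd
      obtain rfl : x = p • x' := funext hx'
      have hi' : x' i ≠ 0 := right_ne_zero_of_mul hi
      have lt : (x' i).natAbs < k := by
        have : p.natAbs ≠ 1 := hp ∘ Int.isUnit_iff_natAbs_eq.mpr
        have : p.natAbs ≠ 0 := Int.natAbs_ne_zero.mpr (left_ne_zero_of_mul hi)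
        rw [← h, Pi.smul_apply, smul_eq_mul, Int.natAbs_mul]
        exact lt_mul_of_one_lt_left (Int.natAbs_pos.mpr hi') (by omega)
      obtain ⟨y, hy, hQ⟩ := ih _ lt (fun h0 => hi' (congrFun h0 i)) hi' rfl
      obtain ⟨z, hz, hQz⟩ := step y hy
      exact ⟨z, hz, by rw [hQz, Q.map_smul, hQ, Q.map_smul]⟩
    · exact ⟨x, hdvd, rfl⟩

theorem exists_signs_not_three_dvd_add {x y z : ℤ} (h : ¬(3 ∣ x ∧ 3 ∣ y ∧ 3 ∣ z)) :
    ∃ y' z' : ℤ, y' ^ 2 = y ^ 2 ∧ z' ^ 2 = z ^ 2 ∧ ¬3 ∣ x + y' + z' := by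
  by_contra! hall
  have h₁ := hall y z rfl rfl
  have h₂ := hall (-y) z (neg_sq y) rfl
  have h₃ := hall y (-z) rfl (neg_sq z)
  have h₄ := hall (-y) (-z) (neg_sq y) (neg_sq z)
  omega

theorem exists_sum_three_sq_not_three_dvd {a b c : ℤ} (h : a ^ 2 + b ^ 2 + c ^ 2 ≠ 0) :
    ∃ x y z : ℤ, x ^ 2 + y ^ 2 + z ^ 2 = a ^ 2 + b ^ 2 + c ^ 2 ∧ ¬(3 ∣ x ∧ 3 ∣ y ∧ 3 ∣ z) := by
  let Q : QuadraticForm ℤ (Fin 3 → ℤ) := QuadraticMap.weightedSumSquares ℤ ![1, 1, 1]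
  have Q_apply (v : Fin 3 → ℤ) : Q v = v 0 ^ 2 + v 1 ^ 2 + v 2 ^ 2 := by
    simp [Q, Fin.sum_univ_three, sq]
  have step (v : Fin 3 → ℤ) (hv : ¬∀ i, 3 ∣ v i) :
      ∃ w, ¬(∀ i, 3 ∣ w i) ∧ Q w = Q ((3 : ℤ) • v) := by
    obtain ⟨y, z, hy, hz, hs⟩ :=
      exists_signs_not_three_dvd_add (by simpa [Fin.forall_fin_succ] using hv)
    -- three times the reflection of `(v 0, y, z)` in the plane orthogonal to `(1, 1, 1)`
    refine ⟨![v 0 - 2 * (y + z), y - 2 * (v 0 + z), z - 2 * (v 0 + y)], ?_, ?_⟩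
    · simp only [Fin.forall_fin_succ, cons_val, IsEmpty.forall_iff, and_true]
      omega
    · simp only [Q_apply, Pi.smul_apply, smul_eq_mul, cons_val]
      linear_combination 9 * hy + 9 * hz
  have ne_zero : ![a, b, c] ≠ 0 := by
    intro h0
    simp_all
  obtain ⟨w, hw, hQ⟩ := exists_not_forall_dvd_of_smul (by norm_num [Int.isUnit_iff]) Q step ne_zero
  exact ⟨w 0, w 1, w 2, by simpa [Q_apply] using hQ, by simpa [Fin.forall_fin_succ] using hw⟩

theorem exists_sq_add_two_mul_sq_not_three_dvd {a b : ℤ} (h : a ^ 2 + 2 * b ^ 2 ≠ 0) :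
    ∃ x y : ℤ, x ^ 2 + 2 * y ^ 2 = a ^ 2 + 2 * b ^ 2 ∧ ¬(3 ∣ x ∧ 3 ∣ y) := by
  let Q : QuadraticForm ℤ (Fin 2 → ℤ) := QuadraticMap.weightedSumSquares ℤ ![1, 2]
  have Q_apply (v : Fin 2 → ℤ) : Q v = v 0 ^ 2 + 2 * v 1 ^ 2 := by
    simp [Q, Fin.sum_univ_two, sq]
  have step (v : Fin 2 → ℤ) (hv : ¬∀ i, 3 ∣ v i) :
      ∃ w, ¬(∀ i, 3 ∣ w i) ∧ Q w = Q ((3 : ℤ) • v) := by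
    rw [Fin.forall_fin_two] at hv
    -- the norm form of `ℤ[√-2]`, in which `9` is the norm of `1 ± 2√-2`
    by_cases hadd : 3 ∣ v 0 + v 1
    · refine ⟨![v 0 - 4 * v 1, 2 * v 0 + v 1], ?_, ?_⟩
      · simp only [Fin.forall_fin_two, cons_val]
        omega
      · simp only [Q_apply, Pi.smul_apply, smul_eq_mul, cons_val]
        ring
    · refine ⟨![v 0 + 4 * v 1, 2 * v 0 - v 1], ?_, ?_⟩
      · simp only [Fin.forall_fin_two, cons_val]
        omega
      · simp only [Q_apply, Pi.smul_apply, smul_eq_mul, cons_val]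
        ring
  have ne_zero : ![a, b] ≠ 0 := by
    intro h0
    simp_all
  obtain ⟨w, hw, hQ⟩ := exists_not_forall_dvd_of_smul (by norm_num [Int.isUnit_iff]) Q step ne_zero
  exact ⟨w 0, w 1, by simpa [Q_apply] using hQ, by simpa [Fin.forall_fin_two] using hw⟩

theorem sq_emod_four (a : ℤ) : a ^ 2 % 4 = a % 2 := by
  rcases Int.even_or_odd' a with ⟨k, rfl | rfl⟩ <;> ring_nf <;> omega

theorem exists_odd_add_not_three_dvd_add {N : ℤ} (hN : N % 4 = 1) {a b c : ℤ}
    (h : a ^ 2 + b ^ 2 + c ^ 2 = N) (hdvd : ¬(3 ∣ a ∧ 3 ∣ b ∧ 3 ∣ c)) :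
    ∃ p q v : ℤ, p ^ 2 + q ^ 2 + v ^ 2 = N ∧ Odd (p + q) ∧ ¬3 ∣ p + q := by
  have of_not_dvd {p q v : ℤ} (h : p ^ 2 + q ^ 2 + v ^ 2 = N)
      (hpq : Odd (p + q) ∧ ¬(3 ∣ p ∧ 3 ∣ q)) :
      ∃ p q v : ℤ, p ^ 2 + q ^ 2 + v ^ 2 = N ∧ Odd (p + q) ∧ ¬3 ∣ p + q := by
    by_cases hadd : 3 ∣ p + q
    · refine ⟨p, -q, v, by rwa [neg_sq], ?_, by omega⟩
      rw [← sub_eq_add_neg, Int.odd_sub, ← Int.odd_add]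
      exact hpq.1
    · exact ⟨p, q, v, h, hpq.1, hadd⟩
  by_cases hbc : Odd (b + c) ∧ ¬(3 ∣ b ∧ 3 ∣ c)
  · exact of_not_dvd (v := a) (by rw [← h]; ring) hbc
  by_cases hac : Odd (a + c) ∧ ¬(3 ∣ a ∧ 3 ∣ c)
  · exact of_not_dvd (v := b) (by rw [← h]; ring) hac
  refine of_not_dvd h ?_
  have a_sq := sq_emod_four a
  have b_sq := sq_emod_four b
  have c_sq := sq_emod_four c
  rw [Int.odd_iff] at hbc hac ⊢
  omega

theorem gcd_six_eq_one {x : ℤ} (h2 : x % 2 = 1) (h3 : ¬3 ∣ x) : Int.gcd x 6 = 1 := by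
  rw [← Int.isCoprime_iff_gcd_eq_one, isCoprime_comm]
  exact .mul_left (Int.prime_two.coprime_iff_not_dvd.mpr (by omega) : IsCoprime 2 x)
    (Int.prime_three.coprime_iff_not_dvd.mpr h3)

theorem gcd_six_eq_one_of_sq_add_two_mul_sq_add_three_mul_sq {x y z N : ℤ}
    (h : 24 * N + 6 = x ^ 2 + 2 * y ^ 2 + 3 * z ^ 2) (hz : Odd z) (hxy : ¬(3 ∣ x ∧ 3 ∣ y)) :
    Int.gcd x 6 = 1 ∧ Int.gcd y 6 = 1 := by
  have x_sq := sq_emod_four x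
  have y_sq := sq_emod_four y
  have z_sq := sq_emod_four z
  rw [Int.odd_iff] at hz
  have three_dvd : (3 : ℤ) ∣ (x - y) * (x + y) :=
    ⟨8 * N + 2 - y ^ 2 - z ^ 2, by linear_combination -h⟩
  rcases Int.prime_three.dvd_or_dvd three_dvd with hsub | hadd <;>
    exact ⟨gcd_six_eq_one (by omega) (by omega), gcd_six_eq_one (by omega) (by omega)⟩

theorem rep_24n_add_six (n : ℕ) :
    ∃ x y z : ℤ, Int.gcd x 6 = 1 ∧ Int.gcd y 6 = 1 ∧ Int.gcd z 6 = 1 ∧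
      24 * (n : ℤ) + 6 = x ^ 2 + 2 * y ^ 2 + 3 * z ^ 2 := by
  obtain ⟨a, b, c, habc⟩ := exists_four_mul_add_one_eq_sum_three_sq n
  obtain ⟨a', b', c', habc', hdvd⟩ :=
    exists_sum_three_sq_not_three_dvd (a := a) (b := b) (c := c) (by omega)
  obtain ⟨p, q, v, hpqv, hodd, hadd⟩ :=
    exists_odd_add_not_three_dvd_add (N := 4 * n + 1) (by omega) (habc'.trans habc.symm) hdvd
  have three_mul : (p - q - 2 * v) ^ 2 + 2 * (p - q + v) ^ 2 = 3 * ((p - q) ^ 2 + 2 * v ^ 2) := by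
    ring
  have sub_ne_zero : p - q ≠ 0 := by have := Int.odd_iff.mp hodd; omega
  obtain ⟨x, y, hxy, hxy3⟩ := exists_sq_add_two_mul_sq_not_three_dvd
    (a := p - q - 2 * v) (b := p - q + v) (by rw [three_mul]; positivity)
  have hsum : 24 * (n : ℤ) + 6 = x ^ 2 + 2 * y ^ 2 + 3 * (p + q) ^ 2 := by
    linear_combination -hxy - 6 * hpqv
  obtain ⟨hx, hy⟩ := gcd_six_eq_one_of_sq_add_two_mul_sq_add_three_mul_sq hsum hodd hxy3
  exact ⟨x, y, p + q, hx, hy, gcd_six_eq_one (Int.odd_iff.mp hodd) hadd, hsum⟩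
end
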